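/- arXiv:2602.05790 — 4 statements merged into one kernel-verified Lean document; each statement's English description precedes it below -/
import Mathlib

section
/- Fix a constant R* > 0 and γ₂ > 0. Let s, ŝ ∈ ℝⁿ with sⱼ, ŝⱼ ≥ 0, Σⱼ sⱼ = Σⱼ ŝⱼ = n, and ‖s − ŝ‖₂ ≤ γ₂ √n. Let T = T_rc(s, R*) and T̂ = T_rc(ŝ, R*). Then |T − T̂| ≤ γ₂ n · 2^{4nR*}. -/
open Real

/-- Euclidean (`ℓ₂`) norm of a vector in `ℝⁿ`. -/
noncomputable def l2norm {n : ℕ} (v : Fin n → ℝ) : ℝ :=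
  Real.sqrt (∑ i, (v i) ^ 2)

/-- Random-coding rate `R_rc(λ, T) = (1/(2n)) Σᵢ log₂(1 + λᵢ T)`. -/
noncomputable def Rrc {n : ℕ} (lam : Fin n → ℝ) (T : ℝ) : ℝ :=
  (1 / (2 * (n : ℝ))) * ∑ i, Real.logb 2 (1 + lam i * T)

/-!
Write `Φ s T = ∑ i, log (1 + s i * T)`, so that `exp (Φ s T) = 2 ^ (2 n R_rc(s, T))`, and let `S` be
the common value of `∑ i, s i` and `∑ i, ŝ i`. Suppose `T̂ ≤ T` and let
`K = exp (Φ s T) = exp (Φ ŝ T̂)`. Expanding `K` as the product of the `1 + s i * T`, or of the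
`1 + ŝ i * T̂`, gives `1 + S T ≤ K` and `1 + S T̂ ≤ K`. In particular every `1 + s i * T` is at most
`K`, so `Φ s` has slope at least `S / K` on `[T̂, T]`, while `Φ ŝ T̂` and `Φ s T̂` differ by at most
`T̂ ‖s - ŝ‖₁`. Hence `S (T - T̂) ≤ K T̂ ‖s - ŝ‖₁`, and `S T̂ ≤ K` turns this into
`S² (T - T̂) ≤ K² ‖s - ŝ‖₁`.
-/

theorem one_add_sum_le_prod_one_add {ι R : Type*} [CommSemiring R] [PartialOrder R]
    [IsOrderedRing R] {f : ι → R} (A : Finset ι) (hf : ∀ i ∈ A, 0 ≤ f i) :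
    1 + ∑ i ∈ A, f i ≤ ∏ i ∈ A, (1 + f i) := by
  induction A using Finset.cons_induction with
  | empty => simp
  | cons a A ha ih =>
    rw [Finset.forall_mem_cons] at hf
    obtain ⟨hfa, hfA⟩ := hf
    have hsum : 0 ≤ ∑ i ∈ A, f i := Finset.sum_nonneg hfA
    rw [Finset.sum_cons, Finset.prod_cons]
    calc 1 + (f a + ∑ i ∈ A, f i)
        ≤ 1 + (f a + ∑ i ∈ A, f i) + f a * ∑ i ∈ A, f i :=
          le_add_of_nonneg_right (mul_nonneg hfa hsum)
      _ = (1 + f a) * (1 + ∑ i ∈ A, f i) := by ring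
      _ ≤ (1 + f a) * ∏ i ∈ A, (1 + f i) :=
          mul_le_mul_of_nonneg_left (ih hfA) (add_nonneg zero_le_one hfa)

theorem log_sub_log_le_div {x y : ℝ} (hx : 0 < x) (hy : 0 < y) :
    log x - log y ≤ (x - y) / y := by
  rw [← log_div hx.ne' hy.ne', sub_div, div_self hy.ne']
  exact log_le_sub_one_of_pos (div_pos hx hy)

section SumLogOneAdd

variable {ι : Type*} [Fintype ι] {s sh : ι → ℝ} {T Th : ℝ}

/-- The unnormalised random-coding rate `∑ i, log (1 + s i * T)`, in nats, over an arbitrary finite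
index type. -/
noncomputable def sumLogOneAdd (s : ι → ℝ) (T : ℝ) : ℝ :=
  ∑ i, log (1 + s i * T)

theorem one_add_sum_mul_le_exp_sumLogOneAdd (hs : ∀ i, 0 ≤ s i) (hT : 0 ≤ T) :
    1 + (∑ i, s i) * T ≤ exp (sumLogOneAdd s T) := by
  have hsT (i : ι) : 0 ≤ s i * T := mul_nonneg (hs i) hT
  calc 1 + (∑ i, s i) * T = 1 + ∑ i, s i * T := by rw [Finset.sum_mul]
    _ ≤ ∏ i, (1 + s i * T) := one_add_sum_le_prod_one_add _ fun i _ ↦ hsT i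
    _ = ∏ i, exp (log (1 + s i * T)) :=
        Finset.prod_congr rfl fun i _ ↦ (exp_log (by linarith [hsT i])).symm
    _ = exp (sumLogOneAdd s T) := (exp_sum _ _).symm

theorem one_add_mul_le_exp_sumLogOneAdd (hs : ∀ i, 0 ≤ s i) (hT : 0 ≤ T) (i : ι) :
    1 + s i * T ≤ exp (sumLogOneAdd s T) := by
  have hi : s i ≤ ∑ j, s j := Finset.single_le_sum (fun j _ ↦ hs j) (Finset.mem_univ i)
  calc 1 + s i * T ≤ 1 + (∑ j, s j) * T := by gcongr
    _ ≤ exp (sumLogOneAdd s T) := one_add_sum_mul_le_exp_sumLogOneAdd hs hT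

theorem sum_mul_sub_le_exp_mul_sumLogOneAdd_sub (hs : ∀ i, 0 ≤ s i) (hTh : 0 ≤ Th)
    (hle : Th ≤ T) :
    (∑ i, s i) * (T - Th) ≤
      exp (sumLogOneAdd s T) * (sumLogOneAdd s T - sumLogOneAdd s Th) := by
  set K := exp (sumLogOneAdd s T)
  have increment (i : ι) : s i * (T - Th) ≤ K * (log (1 + s i * T) - log (1 + s i * Th)) := by
    have hTh_pos : 0 < 1 + s i * Th := by linarith [mul_nonneg (hs i) hTh]
    have hmono : 1 + s i * Th ≤ 1 + s i * T := by gcongr; exact hs i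
    have hT_pos : 0 < 1 + s i * T := hTh_pos.trans_le hmono
    have hlog : 0 ≤ log (1 + s i * T) - log (1 + s i * Th) :=
      sub_nonneg.2 (log_le_log hTh_pos hmono)
    have hslope := log_sub_log_le_div hTh_pos hT_pos
    rw [le_div_iff₀ hT_pos] at hslope
    calc s i * (T - Th)
        ≤ (1 + s i * T) * (log (1 + s i * T) - log (1 + s i * Th)) := by linarith
      _ ≤ K * (log (1 + s i * T) - log (1 + s i * Th)) :=
          mul_le_mul_of_nonneg_right
            (one_add_mul_le_exp_sumLogOneAdd hs (hTh.trans hle) i) hlog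
  rw [Finset.sum_mul, sumLogOneAdd, sumLogOneAdd, ← Finset.sum_sub_distrib, Finset.mul_sum]
  exact Finset.sum_le_sum fun i _ ↦ increment i

theorem sumLogOneAdd_sub_le (hs : ∀ i, 0 ≤ s i) (hsh : ∀ i, 0 ≤ sh i) (hT : 0 ≤ T) :
    sumLogOneAdd sh T - sumLogOneAdd s T ≤ (∑ i, |s i - sh i|) * T := by
  rw [sumLogOneAdd, sumLogOneAdd, ← Finset.sum_sub_distrib, Finset.sum_mul]
  refine Finset.sum_le_sum fun i _ ↦ ?_
  have hs_one : 1 ≤ 1 + s i * T := by linarith [mul_nonneg (hs i) hT]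
  have hsh_pos : 0 < 1 + sh i * T := by linarith [mul_nonneg (hsh i) hT]
  calc log (1 + sh i * T) - log (1 + s i * T)
      ≤ (1 + sh i * T - (1 + s i * T)) / (1 + s i * T) :=
        log_sub_log_le_div hsh_pos (zero_lt_one.trans_le hs_one)
    _ = (sh i - s i) * T / (1 + s i * T) := by ring
    _ ≤ |s i - sh i| * T / (1 + s i * T) := by
        gcongr
        exact abs_sub_comm (s i) (sh i) ▸ le_abs_self _
    _ ≤ |s i - sh i| * T := div_le_self (by positivity) hs_one

theorem sq_sum_mul_abs_sub_le (hs : ∀ i, 0 ≤ s i) (hsh : ∀ i, 0 ≤ sh i)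
    (hsum : ∑ i, s i = ∑ i, sh i) (hT : 0 ≤ T) (hTh : 0 ≤ Th)
    (heq : sumLogOneAdd s T = sumLogOneAdd sh Th) :
    (∑ i, s i) ^ 2 * |T - Th| ≤ (∑ i, |s i - sh i|) * exp (sumLogOneAdd s T) ^ 2 := by
  wlog hle : Th ≤ T generalizing s sh T Th
  · simpa only [hsum, heq, abs_sub_comm] using
      this hsh hs hsum.symm hTh hT heq.symm (le_of_not_ge hle)
  set S := ∑ i, s i
  set K := exp (sumLogOneAdd s T) with hK
  have hS_nonneg : 0 ≤ S := Finset.sum_nonneg fun i _ ↦ hs i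
  have hgap : S * (T - Th) ≤ K * ((∑ i, |s i - sh i|) * Th) :=
    calc S * (T - Th) ≤ K * (sumLogOneAdd s T - sumLogOneAdd s Th) :=
          sum_mul_sub_le_exp_mul_sumLogOneAdd_sub hs hTh hle
      _ ≤ K * ((∑ i, |s i - sh i|) * Th) := by
          rw [heq]
          gcongr
          exact sumLogOneAdd_sub_le hs hsh hTh
  have hSTh : S * Th ≤ K := by
    rw [hK, hsum, heq]
    linarith [one_add_sum_mul_le_exp_sumLogOneAdd hsh hTh]
  calc S ^ 2 * |T - Th| = S * (S * (T - Th)) := by rw [abs_of_nonneg (sub_nonneg.2 hle)]; ring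
    _ ≤ S * (K * ((∑ i, |s i - sh i|) * Th)) := by gcongr
    _ = (∑ i, |s i - sh i|) * (K * (S * Th)) := by ring
    _ ≤ (∑ i, |s i - sh i|) * (K * K) := by gcongr
    _ = (∑ i, |s i - sh i|) * K ^ 2 := by rw [sq]

end SumLogOneAdd

section RandomCodingRate

variable {n : ℕ} {s sh : Fin n → ℝ} {S T Th R : ℝ}

theorem Rrc_eq_sumLogOneAdd (s : Fin n → ℝ) (T : ℝ) :
    Rrc s T = sumLogOneAdd s T / (2 * n * log 2) := by
  simp only [Rrc, sumLogOneAdd, logb, ← Finset.sum_div]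
  ring

theorem pos_of_Rrc_pos (h : 0 < Rrc s T) : 0 < n := by
  refine Nat.pos_of_ne_zero fun hn ↦ h.ne' ?_
  simp [Rrc, hn]

theorem exp_sumLogOneAdd_eq_rpow (s : Fin n → ℝ) (T : ℝ) :
    exp (sumLogOneAdd s T) = 2 ^ (2 * n * Rrc s T) := by
  obtain rfl | hn := eq_or_ne n 0
  · simp [sumLogOneAdd]
  rw [rpow_def_of_pos two_pos, Rrc_eq_sumLogOneAdd]
  field_simp

theorem sum_abs_le_sqrt_mul_l2norm (v : Fin n → ℝ) : ∑ i, |v i| ≤ √n * l2norm v := by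
  simpa [l2norm] using sum_mul_le_sqrt_mul_sqrt Finset.univ (fun _ ↦ 1) fun i ↦ |v i|

theorem sum_abs_le_of_l2norm_le {v : Fin n → ℝ} {γ : ℝ} (hv : l2norm v ≤ γ * √n) :
    ∑ i, |v i| ≤ γ * n :=
  calc ∑ i, |v i| ≤ √n * l2norm v := sum_abs_le_sqrt_mul_l2norm v
    _ ≤ √n * (γ * √n) := by gcongr
    _ = γ * n := by rw [mul_left_comm, mul_self_sqrt n.cast_nonneg]

theorem stmt_12_general (hs : ∀ j, 0 ≤ s j) (hsh : ∀ j, 0 ≤ sh j)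
    (hS : 0 < S) (hsum : ∑ j, s j = S) (hsumh : ∑ j, sh j = S)
    (hT : 0 ≤ T) (hTR : Rrc s T = R) (hTh : 0 ≤ Th) (hThR : Rrc sh Th = R) :
    |T - Th| ≤ (∑ j, |s j - sh j|) / S ^ 2 * 2 ^ (4 * n * R) := by
  have hexp : exp (sumLogOneAdd s T) = 2 ^ (2 * n * R) := hTR ▸ exp_sumLogOneAdd_eq_rpow s T
  have hexph : exp (sumLogOneAdd sh Th) = 2 ^ (2 * n * R) :=
    hThR ▸ exp_sumLogOneAdd_eq_rpow sh Th
  have hbound := sq_sum_mul_abs_sub_le hs hsh (hsum.trans hsumh.symm) hT hTh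
    (exp_injective (hexp.trans hexph.symm))
  have hpow : ((2 : ℝ) ^ (2 * n * R)) ^ 2 = 2 ^ (4 * n * R) := by
    rw [← rpow_mul_natCast zero_le_two]
    ring_nf
  rw [hsum, hexp, hpow] at hbound
  rwa [div_mul_eq_mul_div, le_div_iff₀' (by positivity)]

end RandomCodingRate

/-- perturbation bound for `T_rc`: if `T = T_rc(s, R*)` and
`T̂ = T_rc(ŝ, R*)` (the unique positive solutions of `R_rc(·, T) = R*`) and
`‖s - ŝ‖₂ ≤ γ₂ √n`, then `|T - T̂| ≤ γ₂ n 2^{4nR*}`. -/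
theorem stmt_12 (n : ℕ) (Rstar γ₂ : ℝ) (hRstar : 0 < Rstar) (hγ : 0 < γ₂)
    (s sh : Fin n → ℝ) (hs : ∀ j, 0 ≤ s j) (hsh : ∀ j, 0 ≤ sh j)
    (hsum : ∑ j, s j = (n : ℝ)) (hsumh : ∑ j, sh j = (n : ℝ))
    (hclose : l2norm (s - sh) ≤ γ₂ * Real.sqrt (n : ℝ))
    (T Th : ℝ) (hT : 0 < T) (hTR : Rrc s T = Rstar)
    (hTh : 0 < Th) (hThR : Rrc sh Th = Rstar) :
    |T - Th| ≤ γ₂ * (n : ℝ) * (2 : ℝ) ^ (4 * (n : ℝ) * Rstar) := by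
  have hn : (1 : ℝ) ≤ n := Nat.one_le_cast.2 (pos_of_Rrc_pos (hTR ▸ hRstar))
  refine (stmt_12_general hs hsh (by linarith) hsum hsumh hT.le hTR hTh.le hThR).trans ?_
  gcongr
  exact (div_le_self (by positivity) (one_le_pow₀ hn)).trans (sum_abs_le_of_l2norm_le hclose)
end

section
/- Fix D* ∈ [0.005, 0.995] and ε ∈ (0, D*), and set f_n = (D* − ε)/(2n). Then: sup{ 𝐑_rc(λ, D*) − 𝐑_wf(λ, D*) : λ ∈ ℝ₊ⁿ, Σᵢ λᵢ = n } ≤ ε + sup{ 𝐑_rc(λ, D) − 𝐑_wf(λ, D) : λ ∈ ℝ₊ⁿ, Σᵢ λᵢ = n, D ∈ [D* − ε, D*], minᵢ |λᵢ − t_wf(λ, D)| ≥ ε f_n }, where t_wf(λ, D) denotes the water level t > 0 with D_wf(λ, t) = D. -/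
open Real

/-- Waterfilling distortion `D_wf(λ, t) = (1/n) Σᵢ min{λᵢ, t}`. -/
noncomputable def Dwf {n : ℕ} (lam : Fin n → ℝ) (t : ℝ) : ℝ :=
  (1 / (n : ℝ)) * ∑ i, min (lam i) t

/-- Waterfilling rate `R_wf(λ, t) = (1/(2n)) Σᵢ max{0, log₂(λᵢ/t)}`. -/
noncomputable def Rwf {n : ℕ} (lam : Fin n → ℝ) (t : ℝ) : ℝ :=
  (1 / (2 * (n : ℝ))) * ∑ i, max 0 (Real.logb 2 (lam i / t))

/-- Random-coding distortion `D_rc(λ, T) = (1/n) Σᵢ λᵢ/(1 + λᵢ T)`. -/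
noncomputable def Drc {n : ℕ} (lam : Fin n → ℝ) (T : ℝ) : ℝ :=
  (1 / (n : ℝ)) * ∑ i, lam i / (1 + lam i * T)

/-- `t_wf(λ, D)`: the water level `t > 0` with `D_wf(λ, t) = D`. -/
noncomputable def twfD {n : ℕ} (lam : Fin n → ℝ) (D : ℝ) : ℝ :=
  Classical.epsilon fun t => 0 < t ∧ Dwf lam t = D

/-- `𝐑_wf(λ, D) = R_wf(λ, t_wf(λ, D))`. -/
noncomputable def RRwf {n : ℕ} (lam : Fin n → ℝ) (D : ℝ) : ℝ :=
  Rwf lam (twfD lam D)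

/-- `T > 0` solving `D_rc(λ, T) = D`. -/
noncomputable def TrcD {n : ℕ} (lam : Fin n → ℝ) (D : ℝ) : ℝ :=
  Classical.epsilon fun T => 0 < T ∧ Drc lam T = D

/-- `𝐑_rc(λ, D) = R_rc(λ, T)` where `T > 0` solves `D_rc(λ, T) = D`. -/
noncomputable def RRrc {n : ℕ} (lam : Fin n → ℝ) (D : ℝ) : ℝ :=
  Rrc lam (TrcD lam D)

/-!
Lower the water level from `t_wf(λ, D)` to some `t` that keeps distance `δ` from all `n` entries of
`λ`. The `n` forbidden intervals have total length `2nδ`, so a decrease of at most `L = 2nδ`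
suffices. The distortion then drops by at most `L`, which can only increase the random-coding rate,
while the waterfilling rate grows by at most `½ log₂ (t_wf / t) ≤ L / (D - L)`. For
`L = ε (D - ε)` this last bound is at most `ε`.
-/

section

open Set MeasureTheory Metric
open scoped BigOperators Topology

lemma logb_two_one_add_le {x : ℝ} (hx : 0 ≤ x) : logb 2 (1 + x) ≤ 2 * x := by
  have hlog : 1 / 2 ≤ log 2 := by linarith [log_two_gt_d9]
  rw [logb, div_le_iff₀ (by positivity)]
  calc log (1 + x) ≤ x := by linarith [log_le_sub_one_of_pos (show 0 < 1 + x by positivity)]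
    _ = 2 * x * (1 / 2) := by ring
    _ ≤ 2 * x * log 2 := by gcongr

lemma sub_lt_of_Icc_subset_iUnion_ball {ι : Type*} [Fintype ι] {x : ι → ℝ} {a b δ : ℝ}
    (hab : a ≤ b) (h : Icc a b ⊆ ⋃ i, ball (x i) δ) :
    b - a < 2 * Fintype.card ι * δ := by
  obtain ⟨i, hi⟩ := mem_iUnion.1 (h (left_mem_Icc.2 hab))
  have hδ : 0 < δ := pos_of_mem_ball hi
  have hopen : (⋃ i, ball (x i) δ) ∈ 𝓝 b :=
    (isOpen_iUnion fun _ => isOpen_ball).mem_nhds (h (right_mem_Icc.2 hab))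
  obtain ⟨c, hbc, hc⟩ := exists_Ico_subset_of_mem_nhds hopen (exists_gt b)
  have hcover : Ico a c ⊆ ⋃ i, ball (x i) δ := by
    rw [← Ico_union_Ico_eq_Ico hab hbc.le]
    exact union_subset (Ico_subset_Icc_self.trans h) hc
  have hvol : ENNReal.ofReal (c - a) ≤ ENNReal.ofReal (2 * Fintype.card ι * δ) :=
    calc ENNReal.ofReal (c - a) = volume (Ico a c) := volume_Ico.symm
      _ ≤ ∑ i, volume (ball (x i) δ) := (measure_mono hcover).trans (measure_iUnion_fintype_le _ _)
      _ = ENNReal.ofReal (2 * Fintype.card ι * δ) := by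
        simp only [Real.volume_ball, Finset.sum_const, Finset.card_univ]
        rw [← ENNReal.ofReal_nsmul, nsmul_eq_mul]
        congr 1
        ring
  linarith [(ENNReal.ofReal_le_ofReal_iff (by positivity)).1 hvol]

lemma exists_mem_Icc_forall_le_abs_sub {ι : Type*} [Fintype ι] (x : ι → ℝ) {a b δ : ℝ}
    (hab : a ≤ b) (h : 2 * Fintype.card ι * δ ≤ b - a) :
    ∃ t ∈ Icc a b, ∀ i, δ ≤ |x i - t| := by
  by_contra! hnear
  refine h.not_gt (sub_lt_of_Icc_subset_iUnion_ball (x := x) hab fun t ht => ?_)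
  obtain ⟨i, hi⟩ := hnear t ht
  exact mem_iUnion.2 ⟨i, by rwa [mem_ball', Real.dist_eq]⟩

lemma expect_le_of_nonneg {ι : Type*} {s : Finset ι} {f : ι → ℝ} {a : ℝ} (ha : 0 ≤ a)
    (h : ∀ i ∈ s, f i ≤ a) : 𝔼 i ∈ s, f i ≤ a := by
  rcases s.eq_empty_or_nonempty with rfl | hs
  · rwa [Finset.expect_empty]
  · exact Finset.expect_le hs h

variable {n : ℕ} {lam : Fin n → ℝ} {D E s t T : ℝ}

lemma Dwf_eq_expect (lam : Fin n → ℝ) (t : ℝ) : Dwf lam t = 𝔼 i, min (lam i) t := by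
  rw [Dwf, Fintype.expect_eq_sum_div_card, Fintype.card_fin]
  ring

lemma Rwf_eq_expect (lam : Fin n → ℝ) (t : ℝ) :
    Rwf lam t = (𝔼 i, max 0 (logb 2 (lam i / t))) / 2 := by
  rw [Rwf, Fintype.expect_eq_sum_div_card, Fintype.card_fin]
  ring

lemma Drc_eq_expect (lam : Fin n → ℝ) (T : ℝ) : Drc lam T = 𝔼 i, lam i / (1 + lam i * T) := by
  rw [Drc, Fintype.expect_eq_sum_div_card, Fintype.card_fin]
  ring

lemma Rrc_eq_expect (lam : Fin n → ℝ) (T : ℝ) :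
    Rrc lam T = (𝔼 i, logb 2 (1 + lam i * T)) / 2 := by
  rw [Rrc, Fintype.expect_eq_sum_div_card, Fintype.card_fin]
  ring

lemma Dwf_monotone (lam : Fin n → ℝ) : Monotone (Dwf lam) := by
  intro s t hst
  simp only [Dwf_eq_expect]
  gcongr

lemma Dwf_continuous (lam : Fin n → ℝ) : Continuous (Dwf lam) := by
  unfold Dwf
  fun_prop

lemma Dwf_le_self (lam : Fin n → ℝ) (ht : 0 ≤ t) : Dwf lam t ≤ t := by
  rw [Dwf_eq_expect]
  exact expect_le_of_nonneg ht fun i _ => min_le_right _ _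

lemma Dwf_sub_le (lam : Fin n → ℝ) (hst : s ≤ t) : Dwf lam t - Dwf lam s ≤ t - s := by
  simp only [Dwf_eq_expect, ← Finset.expect_sub_distrib]
  refine expect_le_of_nonneg (sub_nonneg.2 hst) fun i _ => ?_
  grind

lemma Dwf_strictMonoOn (lam : Fin n → ℝ) :
    StrictMonoOn (Dwf lam) {t | Dwf lam t < 𝔼 i, lam i} := by
  intro s hs t _ hst
  simp only [mem_ofPred_eq, Dwf_eq_expect] at hs ⊢
  obtain ⟨i, hi, hlt⟩ := Finset.exists_lt_of_expect_lt_expect hs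
  refine Finset.expect_lt_expect (fun _ _ => min_le_min_left _ hst.le) ⟨i, hi, ?_⟩
  grind

lemma exists_Dwf_eq (hD : 0 < D) (hDlam : D ≤ 𝔼 i, lam i) : ∃ t, 0 < t ∧ Dwf lam t = D := by
  obtain ⟨M, hM⟩ := (finite_range lam).bddAbove
  have hM_eq : Dwf lam M = 𝔼 i, lam i := by
    rw [Dwf_eq_expect]
    exact Finset.expect_congr rfl fun i _ => min_eq_left (hM (mem_range_self i))
  obtain ⟨t, rfl⟩ := mem_range_of_exists_le_of_exists_ge (Dwf_continuous lam)
    ⟨0, (Dwf_le_self lam le_rfl).trans hD.le⟩ ⟨M, hDlam.trans_eq hM_eq.symm⟩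
  refine ⟨t, ?_, rfl⟩
  by_contra! ht
  exact hD.not_ge ((Dwf_monotone lam ht).trans (Dwf_le_self lam le_rfl))

lemma twfD_pos (hD : 0 < D) (hDlam : D ≤ 𝔼 i, lam i) : 0 < twfD lam D :=
  (Classical.epsilon_spec (exists_Dwf_eq hD hDlam)).1

lemma Dwf_twfD (hD : 0 < D) (hDlam : D ≤ 𝔼 i, lam i) : Dwf lam (twfD lam D) = D :=
  (Classical.epsilon_spec (exists_Dwf_eq hD hDlam)).2

lemma le_twfD (hD : 0 < D) (hDlam : D ≤ 𝔼 i, lam i) : D ≤ twfD lam D :=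
  (Dwf_twfD hD hDlam).symm.trans_le (Dwf_le_self lam (twfD_pos hD hDlam).le)

lemma twfD_Dwf (ht : 0 < Dwf lam t) (htlam : Dwf lam t < 𝔼 i, lam i) :
    twfD lam (Dwf lam t) = t := by
  have hDwf := Dwf_twfD ht htlam.le
  exact (Dwf_strictMonoOn lam).injOn (hDwf.trans_lt htlam) htlam hDwf

lemma exists_twfD_eq (hDlam : D < 𝔼 i, lam i) (htD : t ≤ twfD lam D) (hsub : twfD lam D - t < D) :
    ∃ E ∈ Icc (D - (twfD lam D - t)) D, twfD lam E = t := by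
  have hD : 0 < D := (sub_nonneg.2 htD).trans_lt hsub
  have hDwf : Dwf lam (twfD lam D) = D := Dwf_twfD hD hDlam.le
  have hlower : D - (twfD lam D - t) ≤ Dwf lam t := by linarith [Dwf_sub_le lam htD]
  have hupper : Dwf lam t ≤ D := (Dwf_monotone lam htD).trans_eq hDwf
  exact ⟨Dwf lam t, ⟨hlower, hupper⟩,
    twfD_Dwf ((sub_pos.2 hsub).trans_le hlower) (hupper.trans_lt hDlam)⟩

lemma Rwf_nonneg (lam : Fin n → ℝ) (t : ℝ) : 0 ≤ Rwf lam t := by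
  rw [Rwf_eq_expect]
  positivity

lemma max_zero_logb_div_le (x : ℝ) (hs : 0 < s) (hst : s ≤ t) :
    max 0 (logb 2 (x / s)) ≤ max 0 (logb 2 (x / t)) + logb 2 (t / s) := by
  have ht : 0 < t := hs.trans_le hst
  have hts : 0 ≤ logb 2 (t / s) := logb_nonneg one_lt_two ((one_le_div hs).2 hst)
  rcases eq_or_ne x 0 with rfl | hx
  · simpa only [zero_div, logb_zero, max_self, zero_add] using hts
  · have hsplit : logb 2 (x / s) = logb 2 (x / t) + logb 2 (t / s) := by
      rw [← logb_mul (by positivity) (by positivity), div_mul_div_cancel₀ ht.ne']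
    rw [hsplit]
    exact max_le (by positivity) (by gcongr; exact le_max_right _ _)

lemma Rwf_le_add_logb (lam : Fin n → ℝ) (hs : 0 < s) (hst : s ≤ t) :
    Rwf lam s ≤ Rwf lam t + logb 2 (t / s) / 2 := by
  have hts : 0 ≤ logb 2 (t / s) := logb_nonneg one_lt_two ((one_le_div hs).2 hst)
  rw [← sub_le_iff_le_add']
  simp only [Rwf_eq_expect, ← sub_div, ← Finset.expect_sub_distrib]
  gcongr
  exact expect_le_of_nonneg hts fun i _ =>
    sub_le_iff_le_add'.2 (max_zero_logb_div_le (lam i) hs hst)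

lemma Drc_zero (lam : Fin n → ℝ) : Drc lam 0 = 𝔼 i, lam i := by
  simp only [Drc_eq_expect, mul_zero, add_zero, div_one]

lemma Drc_antitoneOn (h0 : ∀ i, 0 ≤ lam i) : AntitoneOn (Drc lam) (Ici 0) := by
  intro S hS T _ hST
  simp only [Drc_eq_expect]
  gcongr with i
  exacts [h0 i, by have := mul_nonneg (h0 i) hS; positivity, h0 i]

lemma Drc_continuousOn (h0 : ∀ i, 0 ≤ lam i) : ContinuousOn (Drc lam) (Ici 0) := by
  unfold Drc
  refine continuousOn_const.mul (continuousOn_finsetSum _ fun i _ => ?_)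
  refine continuousOn_const.div (by fun_prop) fun T hT => ?_
  have := mul_nonneg (h0 i) hT
  positivity

lemma Drc_le_inv (h0 : ∀ i, 0 ≤ lam i) (hT : 0 < T) : Drc lam T ≤ T⁻¹ := by
  rw [Drc_eq_expect]
  refine expect_le_of_nonneg (inv_pos.2 hT).le fun i _ => ?_
  have := mul_nonneg (h0 i) hT.le
  rw [div_le_iff₀ (by positivity), inv_mul_eq_div, le_div_iff₀ hT]
  linarith

lemma exists_Drc_eq (h0 : ∀ i, 0 ≤ lam i) (hD : 0 < D) (hDlam : D < 𝔼 i, lam i) :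
    ∃ T, 0 < T ∧ Drc lam T = D := by
  have hD_inv : 0 < D⁻¹ := inv_pos.2 hD
  have hle : Drc lam D⁻¹ ≤ D := (Drc_le_inv h0 hD_inv).trans_eq (inv_inv D)
  have hlt : D < Drc lam 0 := by rwa [Drc_zero]
  obtain ⟨T, hT, hTD⟩ := intermediate_value_Ioc' hD_inv.le
    ((Drc_continuousOn h0).mono Icc_subset_Ici_self) ⟨hle, hlt⟩
  exact ⟨T, hT.1, hTD⟩

lemma TrcD_pos (h0 : ∀ i, 0 ≤ lam i) (hD : 0 < D) (hDlam : D < 𝔼 i, lam i) : 0 < TrcD lam D :=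
  (Classical.epsilon_spec (exists_Drc_eq h0 hD hDlam)).1

lemma Drc_TrcD (h0 : ∀ i, 0 ≤ lam i) (hD : 0 < D) (hDlam : D < 𝔼 i, lam i) :
    Drc lam (TrcD lam D) = D :=
  (Classical.epsilon_spec (exists_Drc_eq h0 hD hDlam)).2

lemma TrcD_le_inv (h0 : ∀ i, 0 ≤ lam i) (hD : 0 < D) (hDlam : D < 𝔼 i, lam i) :
    TrcD lam D ≤ D⁻¹ := by
  have hT := TrcD_pos h0 hD hDlam
  rw [le_inv_comm₀ hT hD]
  exact (Drc_TrcD h0 hD hDlam).symm.trans_le (Drc_le_inv h0 hT)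

lemma TrcD_antitoneOn (h0 : ∀ i, 0 ≤ lam i) : AntitoneOn (TrcD lam) (Ioo 0 (𝔼 i, lam i)) := by
  rw [antitoneOn_iff_forall_lt]
  intro D hD E hE hDE
  refine ((Drc_antitoneOn h0).reflect_lt (TrcD_pos h0 hD.1 hD.2).le
    (TrcD_pos h0 hE.1 hE.2).le ?_).le
  rwa [Drc_TrcD h0 hD.1 hD.2, Drc_TrcD h0 hE.1 hE.2]

lemma Rrc_monotoneOn (h0 : ∀ i, 0 ≤ lam i) : MonotoneOn (Rrc lam) (Ici 0) := by
  intro S hS T _ hST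
  simp only [Rrc_eq_expect]
  gcongr with i
  · exact one_lt_two
  · have := mul_nonneg (h0 i) hS
    positivity
  · exact h0 i

lemma Rrc_le_mul (h0 : ∀ i, 0 ≤ lam i) (hT : 0 ≤ T) : Rrc lam T ≤ (𝔼 i, lam i) * T := by
  rw [Rrc_eq_expect, div_le_iff₀ two_pos, Finset.expect_mul, Finset.expect_mul]
  gcongr with i
  exact (logb_two_one_add_le (mul_nonneg (h0 i) hT)).trans_eq (mul_comm _ _)

lemma RRrc_antitoneOn (h0 : ∀ i, 0 ≤ lam i) : AntitoneOn (RRrc lam) (Ioo 0 (𝔼 i, lam i)) :=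
  fun _ hD _ hE hDE => Rrc_monotoneOn h0 (TrcD_pos h0 hE.1 hE.2).le (TrcD_pos h0 hD.1 hD.2).le
    (TrcD_antitoneOn h0 hD hE hDE)

lemma RRrc_le_div (h0 : ∀ i, 0 ≤ lam i) (hD : 0 < D) (hDlam : D < 𝔼 i, lam i) :
    RRrc lam D ≤ (𝔼 i, lam i) / D :=
  calc RRrc lam D ≤ (𝔼 i, lam i) * TrcD lam D := Rrc_le_mul h0 (TrcD_pos h0 hD hDlam).le
    _ ≤ (𝔼 i, lam i) * D⁻¹ := by
      gcongr
      exacts [hD.le.trans hDlam.le, TrcD_le_inv h0 hD hDlam]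
    _ = (𝔼 i, lam i) / D := (div_eq_mul_inv _ _).symm

lemma RRwf_le_add (hE : 0 < E) (hElam : E ≤ 𝔼 i, lam i) (hED : twfD lam E ≤ twfD lam D) :
    RRwf lam E ≤ RRwf lam D + (twfD lam D - twfD lam E) / E := by
  have ht : 0 < twfD lam E := twfD_pos hE hElam
  have hsub : 0 ≤ twfD lam D - twfD lam E := sub_nonneg.2 hED
  calc RRwf lam E ≤ RRwf lam D + logb 2 (twfD lam D / twfD lam E) / 2 :=
        Rwf_le_add_logb lam ht hED
    _ = RRwf lam D + logb 2 (1 + (twfD lam D - twfD lam E) / twfD lam E) / 2 := by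
        rw [one_add_div ht.ne', add_sub_cancel]
    _ ≤ RRwf lam D + (twfD lam D - twfD lam E) / twfD lam E := by
        linarith [logb_two_one_add_le (div_nonneg hsub ht.le)]
    _ ≤ RRwf lam D + (twfD lam D - twfD lam E) / E := by
        gcongr
        exact le_twfD hE hElam

lemma RRrc_sub_RRwf_le_div (h0 : ∀ i, 0 ≤ lam i) (hD : 0 < D) (hDlam : D < 𝔼 i, lam i) :
    RRrc lam D - RRwf lam D ≤ (𝔼 i, lam i) / D :=
  (sub_le_self _ (Rwf_nonneg lam _)).trans (RRrc_le_div h0 hD hDlam)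

lemma exists_forall_le_abs_sub_twfD {L δ : ℝ} (h0 : ∀ i, 0 ≤ lam i) (hDlam : D < 𝔼 i, lam i)
    (hL : 0 ≤ L) (hLD : L < D) (hδ : 2 * n * δ ≤ L) :
    ∃ E ∈ Icc (D - L) D, (∀ i, δ ≤ |lam i - twfD lam E|) ∧
      RRrc lam D - RRwf lam D ≤ L / (D - L) + (RRrc lam E - RRwf lam E) := by
  have hD : 0 < D := hL.trans_lt hLD
  have hDL : 0 < D - L := sub_pos.2 hLD
  obtain ⟨t, ⟨hLt, htD⟩, hfar⟩ := exists_mem_Icc_forall_le_abs_sub lam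
    (sub_le_self (twfD lam D) hL) (δ := δ) (by simpa only [Fintype.card_fin, sub_sub_cancel])
  obtain ⟨E, ⟨hsub, hED⟩, rfl⟩ := exists_twfD_eq hDlam htD (by linarith)
  have hDE : D - L ≤ E := by linarith
  have hE0 : 0 < E := hDL.trans_le hDE
  have hElam : E < 𝔼 i, lam i := hED.trans_lt hDlam
  refine ⟨E, ⟨hDE, hED⟩, hfar, ?_⟩
  have hrc : RRrc lam D ≤ RRrc lam E := RRrc_antitoneOn h0 ⟨hE0, hElam⟩ ⟨hD, hDlam⟩ hED
  have hwf : RRwf lam E ≤ RRwf lam D + (twfD lam D - twfD lam E) / E :=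
    RRwf_le_add hE0 hElam.le htD
  have hloss : (twfD lam D - twfD lam E) / E ≤ L / (D - L) :=
    div_le_div₀ hL (by linarith) hDL hDE
  linarith

lemma expect_eq_one_of_sum_eq (hn : 1 ≤ n) (hlam : ∑ i, lam i = n) : 𝔼 i, lam i = 1 := by
  rw [Fintype.expect_eq_sum_div_card, hlam, Fintype.card_fin]
  exact div_self (by positivity)

theorem stmt_13_general (n : ℕ) (hn : 1 ≤ n) (Dstar ε : ℝ)
    (hD : Dstar ∈ Ioo (0 : ℝ) 1) (hε : ε ∈ Ico (0 : ℝ) Dstar) :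
    sSup {x : ℝ | ∃ lam : Fin n → ℝ, (∀ i, 0 ≤ lam i) ∧ (∑ i, lam i) = (n : ℝ) ∧
          x = RRrc lam Dstar - RRwf lam Dstar}
      ≤ ε + sSup {x : ℝ | ∃ (lam : Fin n → ℝ) (D : ℝ),
          (∀ i, 0 ≤ lam i) ∧ (∑ i, lam i) = (n : ℝ) ∧
          D ∈ Icc (Dstar - ε) Dstar ∧
          (∀ i, ε * ((Dstar - ε) / (2 * (n : ℝ))) ≤ |lam i - twfD lam D|) ∧
          x = RRrc lam D - RRwf lam D} := by
  have hgap : 0 < Dstar - ε := sub_pos.2 hε.2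
  have hL : ε * (Dstar - ε) ≤ ε := mul_le_of_le_one_right hε.1 (by linarith [hD.2, hε.1])
  have hloss : ε * (Dstar - ε) / (Dstar - ε * (Dstar - ε)) ≤ ε := by
    rw [div_le_iff₀ (by linarith)]
    exact mul_le_mul_of_nonneg_left (by linarith) hε.1
  refine csSup_le ⟨_, fun _ => 1, fun _ => zero_le_one, by simp, rfl⟩ ?_
  rintro _ ⟨lam, h0, hsum, rfl⟩
  obtain ⟨D, hDmem, hfar, hle⟩ := exists_forall_le_abs_sub_twfD h0
    (hD.2.trans_eq (expect_eq_one_of_sum_eq hn hsum).symm) (mul_nonneg hε.1 hgap.le)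
    (hL.trans_lt hε.2) (δ := ε * ((Dstar - ε) / (2 * n))) (by field_simp; exact le_rfl)
  refine hle.trans (add_le_add hloss (le_csSup ⟨1 / (Dstar - ε), ?_⟩
    ⟨lam, D, h0, hsum, Icc_subset_Icc_left (by linarith) hDmem, hfar, rfl⟩))
  rintro _ ⟨mu, E, h0, hsum, hE, -, rfl⟩
  have hmean := expect_eq_one_of_sum_eq hn hsum
  calc RRrc mu E - RRwf mu E ≤ 1 / E := hmean ▸ RRrc_sub_RRwf_le_div h0 (hgap.trans_le hE.1)
        (hmean ▸ hE.2.trans_lt hD.2)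
    _ ≤ 1 / (Dstar - ε) := one_div_le_one_div_of_le hgap hE.1

end

/-- reduction to spectra whose eigenvalues are bounded away from the
water level (Claim "interior"), with `f_n = (D* - ε)/(2n)`. -/
theorem stmt_13 (n : ℕ) (hn : 1 ≤ n) (Dstar ε : ℝ)
    (hD : Dstar ∈ Set.Icc (0.005 : ℝ) 0.995) (hε : ε ∈ Set.Ioo (0 : ℝ) Dstar) :
    sSup {x : ℝ | ∃ lam : Fin n → ℝ, (∀ i, 0 ≤ lam i) ∧ (∑ i, lam i) = (n : ℝ) ∧
          x = RRrc lam Dstar - RRwf lam Dstar}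
      ≤ ε + sSup {x : ℝ | ∃ (lam : Fin n → ℝ) (D : ℝ),
          (∀ i, 0 ≤ lam i) ∧ (∑ i, lam i) = (n : ℝ) ∧
          D ∈ Set.Icc (Dstar - ε) Dstar ∧
          (∀ i, ε * ((Dstar - ε) / (2 * (n : ℝ))) ≤ |lam i - twfD lam D|) ∧
          x = RRrc lam D - RRwf lam D} := by
  exact stmt_13_general n hn Dstar ε (Set.Icc_subset_Ioo (by norm_num) (by norm_num) hD)
    (Set.Ioo_subset_Ico_self hε)
end

section
/- Let n ≥ 1 and 1 ≤ m ≤ n, and let λ ∈ ℝⁿ have exactly m coordinates equal to n/m and the remaining n − m coordinates equal to 0 (a semi-flat spectrum). Then for every D ∈ (0, 1): 𝐑_rc(λ, D) = 𝐑_wf(λ, D) = (m/(2n)) log₂(1/D). In other words, the random-coding and waterfilling rate-distortion tradeoffs coincide for all semi-flat spectra. -/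
open Real

/-! Both rates have the form `(1/(2n)) Σᵢ log₂(λᵢ/dᵢ)`, where the `dᵢ` are the summands of the
corresponding distortion; a vanishing `λᵢ` contributes `log₂(0/0)`, which Lean evaluates to `0`.
Each `dᵢ` is monotone in the curve parameter, so the mean distortion determines every `dᵢ`, and with
it the rate. On a spectrum with values in `{0, a}` the substitution `T = 1/t - 1/a` turns the
random-coding `dᵢ` into the waterfilling ones, so the two curves coincide point by point. -/

theorem eq_of_mean_eq {n : ℕ} {f g : Fin n → ℝ} (hfg : f ≤ g ∨ g ≤ f)
    (hmean : (1 / (n : ℝ)) * ∑ i, f i = (1 / (n : ℝ)) * ∑ i, g i) : f = g := by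
  rcases n.eq_zero_or_pos with rfl | hn
  · exact Subsingleton.elim f g
  have hsum : ∑ i, f i = ∑ i, g i := mul_left_cancel₀ (by positivity) hmean
  rcases hfg with hle | hle
  · exact hle.eq_of_not_lt fun hlt => (Fintype.sum_strictMono hlt).ne hsum
  · exact (hle.eq_of_not_lt fun hlt => (Fintype.sum_strictMono hlt).ne' hsum).symm

theorem sum_comp_eq_natCard_nsmul {ι X M : Type*} [Fintype ι] [Zero X] [AddCommMonoid M]
    {x : ι → X} {a : X} (hx : ∀ i, x i = a ∨ x i = 0) {f : X → M} (hf : f 0 = 0) :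
    ∑ i, f (x i) = Nat.card {i // x i = a} • f a := by
  classical
  have hterm : ∀ i, f (x i) = if x i = a then f a else 0 := by
    intro i
    split_ifs with hi
    · rw [hi]
    · rw [(hx i).resolve_left hi, hf]
  simp only [hterm, ← Finset.sum_filter, Finset.sum_const, Nat.card_eq_fintype_card,
    Fintype.card_subtype]

section ComponentDistortions

theorem max_zero_logb_div {b x t : ℝ} (hb : 1 < b) (hx : 0 ≤ x) (ht : 0 < t) :
    max 0 (logb b (x / t)) = logb b (x / min x t) := by
  rcases hx.eq_or_lt with rfl | hx
  · simp
  rcases le_total x t with hxt | htx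
  · rw [min_eq_left hxt, div_self hx.ne', logb_one, max_eq_left]
    exact logb_nonpos hb (by positivity) ((div_le_one ht).2 hxt)
  · rw [min_eq_right htx, max_eq_right (logb_nonneg hb ((one_le_div ht).2 htx))]

theorem logb_div_div_one_add_mul (b x T : ℝ) :
    logb b (x / (x / (1 + x * T))) = logb b (1 + x * T) := by
  rcases eq_or_ne x 0 with rfl | hx
  · simp
  · rw [div_div_cancel₀ hx]

theorem div_one_add_mul_anti {x S T : ℝ} (hx : 0 ≤ x) (hS : 0 ≤ S) (hST : S ≤ T) :
    x / (1 + x * T) ≤ x / (1 + x * S) := by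
  gcongr

theorem div_one_add_mul_inv_sub_inv {a t x : ℝ} (ht : 0 < t) (hta : t ≤ a)
    (hx : x = a ∨ x = 0) : x / (1 + x * (t⁻¹ - a⁻¹)) = min x t := by
  have ha : 0 < a := ht.trans_le hta
  rcases hx with rfl | rfl
  · have hden : 1 + x * (t⁻¹ - x⁻¹) = x / t := by
      rw [mul_sub, mul_inv_cancel₀ ha.ne', add_sub_cancel, div_eq_mul_inv]
    rw [min_eq_right hta, hden, div_div_cancel₀ ha.ne']
  · simp [ht.le]

end ComponentDistortions

section WellDefined

variable {n : ℕ} {lam : Fin n → ℝ}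

theorem Rwf_eq_sum_logb_div_min (hlam : 0 ≤ lam) {t : ℝ} (ht : 0 < t) :
    Rwf lam t = (1 / (2 * (n : ℝ))) * ∑ i, logb 2 (lam i / min (lam i) t) := by
  simp only [Rwf, max_zero_logb_div one_lt_two (hlam _) ht]

theorem Rrc_eq_sum_logb_div_div (lam : Fin n → ℝ) (T : ℝ) :
    Rrc lam T = (1 / (2 * (n : ℝ))) * ∑ i, logb 2 (lam i / (lam i / (1 + lam i * T))) := by
  simp only [Rrc, logb_div_div_one_add_mul]

theorem Rwf_eq_of_Dwf_eq (hlam : 0 ≤ lam) {s t : ℝ} (hs : 0 < s) (ht : 0 < t)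
    (h : Dwf lam s = Dwf lam t) : Rwf lam s = Rwf lam t := by
  have hmono : Monotone fun u i => min (lam i) u := fun _ _ huv _ => min_le_min_left _ huv
  have hmin := eq_of_mean_eq ((le_total s t).imp (hmono ·) (hmono ·)) h
  simp only [Rwf_eq_sum_logb_div_min hlam hs, Rwf_eq_sum_logb_div_min hlam ht,
    fun i => congrFun hmin i]

theorem Rrc_eq_of_Drc_eq (hlam : 0 ≤ lam) {S T : ℝ} (hS : 0 ≤ S) (hT : 0 ≤ T)
    (h : Drc lam S = Drc lam T) : Rrc lam S = Rrc lam T := by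
  have hdiv := eq_of_mean_eq ((le_total T S).imp
    (fun hTS i => div_one_add_mul_anti (hlam i) hT hTS)
    (fun hST i => div_one_add_mul_anti (hlam i) hS hST)) h
  simp only [Rrc_eq_sum_logb_div_div, fun i => congrFun hdiv i]

theorem RRwf_eq_Rwf (hlam : 0 ≤ lam) {t D : ℝ} (ht : 0 < t) (hD : Dwf lam t = D) :
    RRwf lam D = Rwf lam t := by
  obtain ⟨hpos, hsolves⟩ : 0 < twfD lam D ∧ Dwf lam (twfD lam D) = D :=
    Classical.epsilon_spec (p := fun t => 0 < t ∧ Dwf lam t = D) ⟨t, ht, hD⟩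
  exact Rwf_eq_of_Dwf_eq hlam hpos ht (hsolves.trans hD.symm)

theorem RRrc_eq_Rrc (hlam : 0 ≤ lam) {T D : ℝ} (hT : 0 < T) (hD : Drc lam T = D) :
    RRrc lam D = Rrc lam T := by
  obtain ⟨hpos, hsolves⟩ : 0 < TrcD lam D ∧ Drc lam (TrcD lam D) = D :=
    Classical.epsilon_spec (p := fun T => 0 < T ∧ Drc lam T = D) ⟨T, hT, hD⟩
  exact Rrc_eq_of_Drc_eq hlam hpos.le hT.le (hsolves.trans hD.symm)

end WellDefined

section SemiFlat

variable {n m : ℕ} {lam : Fin n → ℝ} {a t : ℝ}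

theorem nonneg_of_semiFlat (ha : 0 ≤ a) (hvals : ∀ i, lam i = a ∨ lam i = 0) : 0 ≤ lam :=
  fun i => (hvals i).elim (fun hi => ha.trans_eq hi.symm) fun hi => hi.ge

theorem Drc_inv_sub_inv_eq_Dwf (ht : 0 < t) (hta : t ≤ a)
    (hvals : ∀ i, lam i = a ∨ lam i = 0) : Drc lam (t⁻¹ - a⁻¹) = Dwf lam t := by
  simp only [Drc, Dwf, div_one_add_mul_inv_sub_inv ht hta (hvals _)]

theorem Rrc_inv_sub_inv_eq_Rwf (ht : 0 < t) (hta : t ≤ a)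
    (hvals : ∀ i, lam i = a ∨ lam i = 0) : Rrc lam (t⁻¹ - a⁻¹) = Rwf lam t := by
  have hlam : 0 ≤ lam := nonneg_of_semiFlat (ht.le.trans hta) hvals
  simp only [Rrc_eq_sum_logb_div_div, Rwf_eq_sum_logb_div_min hlam ht,
    div_one_add_mul_inv_sub_inv ht hta (hvals _)]

theorem RRrc_Dwf_eq_RRwf_Dwf (ht : 0 < t) (hta : t < a)
    (hvals : ∀ i, lam i = a ∨ lam i = 0) : RRrc lam (Dwf lam t) = RRwf lam (Dwf lam t) := by
  have hlam : 0 ≤ lam := nonneg_of_semiFlat (ht.trans hta).le hvals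
  have hT : 0 < t⁻¹ - a⁻¹ := sub_pos.2 (inv_strictAnti₀ ht hta)
  calc RRrc lam (Dwf lam t)
      = Rrc lam (t⁻¹ - a⁻¹) := RRrc_eq_Rrc hlam hT (Drc_inv_sub_inv_eq_Dwf ht hta.le hvals)
    _ = Rwf lam t := Rrc_inv_sub_inv_eq_Rwf ht hta.le hvals
    _ = RRwf lam (Dwf lam t) := (RRwf_eq_Rwf hlam ht rfl).symm

theorem Dwf_of_semiFlat (ht : 0 ≤ t) (hta : t ≤ a) (hvals : ∀ i, lam i = a ∨ lam i = 0)
    (hcard : Nat.card {i // lam i = a} = m) : Dwf lam t = m * t / n := by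
  rw [Dwf, sum_comp_eq_natCard_nsmul hvals (f := (min · t)) (min_eq_left ht), hcard,
    min_eq_right hta, nsmul_eq_mul]
  ring

theorem Rwf_of_semiFlat (ht : 0 < t) (hta : t ≤ a) (hvals : ∀ i, lam i = a ∨ lam i = 0)
    (hcard : Nat.card {i // lam i = a} = m) : Rwf lam t = m / (2 * n) * logb 2 (a / t) := by
  rw [Rwf, sum_comp_eq_natCard_nsmul hvals (f := fun x => max 0 (logb 2 (x / t))) (by simp),
    hcard, max_eq_right (logb_nonneg one_lt_two ((one_le_div ht).2 hta)), nsmul_eq_mul]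
  ring

end SemiFlat

theorem stmt_16_general {n m : ℕ} {lam : Fin n → ℝ} {a D : ℝ}
    (hvals : ∀ i, lam i = a ∨ lam i = 0) (hcard : Nat.card {i // lam i = a} = m)
    (hD : D ∈ Set.Ioo 0 (m * a / n)) :
    RRrc lam D = RRwf lam D ∧ RRrc lam D = m / (2 * n) * logb 2 (m * a / n / D) := by
  obtain ⟨hD0, hD1⟩ := hD
  have hmean : 0 < m * a / n := hD0.trans hD1
  have hn : (0 : ℝ) < n := n.cast_nonneg.lt_of_ne' fun h => by simp [h] at hmean
  have hm : (0 : ℝ) < m := m.cast_nonneg.lt_of_ne' fun h => by simp [h] at hmean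
  have hlevel : 0 < n * D / m := by positivity
  have hlevel_lt : n * D / m < a := by
    rw [div_lt_iff₀ hm]
    linarith [(lt_div_iff₀ hn).1 hD1]
  have hDwf : Dwf lam (n * D / m) = D := by
    rw [Dwf_of_semiFlat hlevel.le hlevel_lt.le hvals hcard]
    field_simp
  have heq : RRrc lam D = RRwf lam D := hDwf ▸ RRrc_Dwf_eq_RRwf_Dwf hlevel hlevel_lt hvals
  refine ⟨heq, ?_⟩
  calc RRrc lam D
      = RRwf lam D := heq
    _ = Rwf lam (n * D / m) :=
        RRwf_eq_Rwf (nonneg_of_semiFlat (hlevel.trans hlevel_lt).le hvals) hlevel hDwf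
    _ = m / (2 * n) * logb 2 (a / (n * D / m)) :=
        Rwf_of_semiFlat hlevel hlevel_lt.le hvals hcard
    _ = m / (2 * n) * logb 2 (m * a / n / D) := by
        congr 2
        field_simp

/-- for a semi-flat spectrum (exactly `m` eigenvalues equal to `n/m`,
the rest `0`), the random-coding and waterfilling tradeoffs coincide:
`𝐑_rc(λ, D) = 𝐑_wf(λ, D) = (m/(2n)) log₂(1/D)` for every `D ∈ (0,1)`. -/
theorem stmt_16 (n m : ℕ) (hn : 1 ≤ n) (hm : 1 ≤ m) (hmn : m ≤ n)
    (lam : Fin n → ℝ)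
    (hvals : ∀ i, lam i = (n : ℝ) / (m : ℝ) ∨ lam i = 0)
    (hcard : Nat.card {i : Fin n // lam i = (n : ℝ) / (m : ℝ)} = m)
    (D : ℝ) (hD : D ∈ Set.Ioo (0 : ℝ) 1) :
    RRrc lam D = RRwf lam D ∧
    RRrc lam D = ((m : ℝ) / (2 * (n : ℝ))) * Real.logb 2 (1 / D) := by
  have hmean : (m : ℝ) * (n / m) / n = 1 := by field_simp
  simpa only [hmean] using stmt_16_general hvals hcard (hmean.symm ▸ hD)
end

section
/- Fix a rate R* > 0 and set R_nat = R* ln 2. Let λ ∈ ℝⁿ with λⱼ ≥ 0 and Σⱼ λⱼ = n, let W̃ ∈ ℝⁿ, let T = T_rc(λ, R*), and let τ = (T Σⱼ W̃ⱼ² λⱼ²/(1 + λⱼT)²)^{1/2} · (Σⱼ λⱼ/(1 + λⱼT))^{−1/2}. Then Σⱼ ( 4 W̃ⱼ² λⱼ² τ² / (1 + λⱼT)³ + 2 λⱼ² τ⁴ / (1 + λⱼT)² ) ≤ n ‖W̃‖∞⁴ ( 1/(2 R_nat²) + 1/R_nat ). (The left-hand side is exactly the variance of Σⱼ Xⱼ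 for independent Xⱼ = (mⱼ + sⱼ Gⱼ)² with Gⱼ standard normal, mⱼ = W̃ⱼ √λⱼ/(1 + λⱼT) and sⱼ² = λⱼ τ²/(1 + λⱼT).) -/
open Real

/-- Scaling parameter `τ`, as a function of `λ`, `W̃` and `T`:
`τ = (T Σⱼ W̃ⱼ² λⱼ²/(1+λⱼT)²)^{1/2} (Σⱼ λⱼ/(1+λⱼT))^{-1/2}`. -/
noncomputable def tauDef {n : ℕ} (lam Wt : Fin n → ℝ) (T : ℝ) : ℝ :=
  Real.sqrt (T * ∑ j, (Wt j) ^ 2 * (lam j) ^ 2 / (1 + lam j * T) ^ 2) /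
    Real.sqrt (∑ j, lam j / (1 + lam j * T))

/-! Since `T λⱼ / (1 + λⱼ T) ≤ 1`, the numerator of `τ²` is at most `‖W̃‖∞²` times its denominator,
so `τ² ≤ ‖W̃‖∞²`. Elementary estimates on the fractions in `λⱼ T` then bound the variance by
`‖W̃‖∞⁴ (2 T⁻¹ ∑ λⱼ + 2 n T⁻²)`, and `log (1 + x) ≤ x` turns the rate constraint into
`T⁻¹ ≤ ∑ λⱼ / (2 n R_nat)`. -/

section Scalar

variable {l T : ℝ}

lemma one_add_mul_pos (hl : 0 ≤ l) (hT : 0 ≤ T) : 0 < 1 + l * T :=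
  add_pos_of_pos_of_nonneg one_pos (mul_nonneg hl hT)

lemma mul_div_one_add_mul_le_one (hl : 0 ≤ l) (hT : 0 ≤ T) : T * (l / (1 + l * T)) ≤ 1 := by
  rw [← mul_div_assoc, div_le_one (one_add_mul_pos hl hT), mul_comm]
  exact le_add_of_nonneg_left zero_le_one

lemma div_one_add_mul_le_inv (hl : 0 ≤ l) (hT : 0 < T) : l / (1 + l * T) ≤ T⁻¹ := by
  rw [inv_eq_one_div, le_div_iff₀' hT]
  exact mul_div_one_add_mul_le_one hl hT.le

lemma two_mul_sq_div_one_add_mul_cube_le (hl : 0 ≤ l) (hT : 0 < T) :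
    2 * l ^ 2 / (1 + l * T) ^ 3 ≤ l * T⁻¹ := by
  have hx : 0 ≤ l * T := by positivity
  have bernoulli : 1 + 3 * (l * T) ≤ (1 + l * T) ^ 3 :=
    mod_cast one_add_mul_le_pow (a := l * T) (by linarith) 3
  have two_mul_le : 2 * (l * T) ≤ (1 + l * T) ^ 3 := by linarith
  calc 2 * l ^ 2 / (1 + l * T) ^ 3 = l * T⁻¹ * (2 * (l * T) / (1 + l * T) ^ 3) := by field_simp
    _ ≤ l * T⁻¹ :=
        mul_le_of_le_one_right (by positivity) (div_le_one_of_le₀ two_mul_le (by positivity))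

lemma variance_summand_le {a t c : ℝ} (hl : 0 ≤ l) (hT : 0 < T) (ht : 0 ≤ t)
    (hac : a ≤ c) (htc : t ≤ c) :
    4 * a * l ^ 2 * t / (1 + l * T) ^ 3 + 2 * l ^ 2 * t ^ 2 / (1 + l * T) ^ 2
      ≤ c ^ 2 * (2 * l * T⁻¹ + 2 * T⁻¹ ^ 2) := by
  have hc : 0 ≤ c := ht.trans htc
  have := one_add_mul_pos hl hT.le
  calc 4 * a * l ^ 2 * t / (1 + l * T) ^ 3 + 2 * l ^ 2 * t ^ 2 / (1 + l * T) ^ 2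
      ≤ 4 * c * l ^ 2 * c / (1 + l * T) ^ 3 + 2 * l ^ 2 * c ^ 2 / (1 + l * T) ^ 2 := by gcongr
    _ = c ^ 2 * (2 * (2 * l ^ 2 / (1 + l * T) ^ 3) + 2 * (l / (1 + l * T)) ^ 2) := by
        field_simp
        ring
    _ ≤ c ^ 2 * (2 * (l * T⁻¹) + 2 * T⁻¹ ^ 2) := by
        gcongr
        · exact two_mul_sq_div_one_add_mul_cube_le hl hT
        · exact div_one_add_mul_le_inv hl hT
    _ = c ^ 2 * (2 * l * T⁻¹ + 2 * T⁻¹ ^ 2) := by rw [mul_assoc 2 l]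

end Scalar

lemma sq_apply_le_sq_norm {ι : Type*} [Fintype ι] (W : ι → ℝ) (j : ι) : W j ^ 2 ≤ ‖W‖ ^ 2 :=
  sq_le_sq.2 ((norm_le_pi_norm W j).trans (le_abs_self _))

lemma sum_variance_summand_le {ι : Type*} [Fintype ι] {lam W : ι → ℝ} {T τ : ℝ}
    (hlam : ∀ j, 0 ≤ lam j) (hT : 0 < T) (hτ : τ ^ 2 ≤ ‖W‖ ^ 2) :
    ∑ j, (4 * W j ^ 2 * lam j ^ 2 * τ ^ 2 / (1 + lam j * T) ^ 3
          + 2 * lam j ^ 2 * τ ^ 4 / (1 + lam j * T) ^ 2)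
      ≤ ‖W‖ ^ 4 * (2 * (∑ j, lam j) * T⁻¹ + 2 * Fintype.card ι * T⁻¹ ^ 2) := by
  calc ∑ j, (4 * W j ^ 2 * lam j ^ 2 * τ ^ 2 / (1 + lam j * T) ^ 3
          + 2 * lam j ^ 2 * τ ^ 4 / (1 + lam j * T) ^ 2)
      ≤ ∑ j, ‖W‖ ^ 4 * (2 * lam j * T⁻¹ + 2 * T⁻¹ ^ 2) := by
        gcongr with j
        simpa only [← pow_mul] using
          variance_summand_le (hlam j) hT (sq_nonneg τ) (sq_apply_le_sq_norm W j) hτ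
    _ = ‖W‖ ^ 4 * (2 * (∑ j, lam j) * T⁻¹ + 2 * Fintype.card ι * T⁻¹ ^ 2) := by
        simp only [← Finset.mul_sum, ← Finset.sum_mul, Finset.sum_add_distrib, Finset.sum_const,
          Finset.card_univ, nsmul_eq_mul]
        ring

section RandomCoding

variable {n : ℕ} {lam : Fin n → ℝ} {T : ℝ}

lemma tauDef_sq (Wt : Fin n → ℝ) (hlam : ∀ j, 0 ≤ lam j) (hT : 0 ≤ T) :
    tauDef lam Wt T ^ 2 =
      (T * ∑ j, Wt j ^ 2 * lam j ^ 2 / (1 + lam j * T) ^ 2) / ∑ j, lam j / (1 + lam j * T) := by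
  have hp j := one_add_mul_pos (hlam j) hT
  have hden : 0 ≤ ∑ j, lam j / (1 + lam j * T) :=
    Finset.sum_nonneg fun j _ => div_nonneg (hlam j) (hp j).le
  rw [tauDef, div_pow, sq_sqrt (by positivity), sq_sqrt hden]

lemma tauDef_sq_le_sq_norm (Wt : Fin n → ℝ) (hlam : ∀ j, 0 ≤ lam j) (hT : 0 ≤ T) :
    tauDef lam Wt T ^ 2 ≤ ‖Wt‖ ^ 2 := by
  have hu j : 0 ≤ lam j / (1 + lam j * T) :=
    div_nonneg (hlam j) (one_add_mul_pos (hlam j) hT).le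
  rw [tauDef_sq Wt hlam hT]
  refine div_le_of_le_mul₀ (Finset.sum_nonneg fun j _ => hu j) (sq_nonneg _) ?_
  rw [Finset.mul_sum, Finset.mul_sum]
  refine Finset.sum_le_sum fun j _ => ?_
  calc T * (Wt j ^ 2 * lam j ^ 2 / (1 + lam j * T) ^ 2)
      = Wt j ^ 2 * (lam j / (1 + lam j * T)) * (T * (lam j / (1 + lam j * T))) := by
        rw [mul_div_assoc, ← div_pow]
        ring
    _ ≤ Wt j ^ 2 * (lam j / (1 + lam j * T)) :=
        mul_le_of_le_one_right (mul_nonneg (sq_nonneg _) (hu j))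
          (mul_div_one_add_mul_le_one (hlam j) hT)
    _ ≤ ‖Wt‖ ^ 2 * (lam j / (1 + lam j * T)) :=
        mul_le_mul_of_nonneg_right (sq_apply_le_sq_norm Wt j) (hu j)

lemma Rrc_mul_log_two (lam : Fin n → ℝ) (T : ℝ) :
    Rrc lam T * log 2 = (∑ i, log (1 + lam i * T)) / (2 * n) := by
  have hlog : log 2 ≠ 0 := (log_pos one_lt_two).ne'
  simp only [Rrc, logb]
  rw [← Finset.sum_div, mul_assoc, div_mul_cancel₀ _ hlog, one_div_mul_eq_div]

lemma Rrc_mul_log_two_le (h : ∀ i, 0 < 1 + lam i * T) :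
    Rrc lam T * log 2 ≤ (∑ i, lam i) * T / (2 * n) := by
  rw [Rrc_mul_log_two, Finset.sum_mul]
  gcongr with i
  exact (log_le_sub_one_of_pos (h i)).trans_eq (add_sub_cancel_left _ _)

lemma dim_pos_of_Rrc_pos (h : 0 < Rrc lam T) : 0 < n := by
  refine Nat.pos_of_ne_zero ?_
  rintro rfl
  simp [Rrc] at h

lemma inv_le_sum_div_Rrc_mul_log_two (hlam : ∀ i, 0 ≤ lam i) (hT : 0 < T) (hR : 0 < Rrc lam T) :
    T⁻¹ ≤ (∑ i, lam i) / (2 * n * (Rrc lam T * log 2)) := by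
  have hn : (0 : ℝ) < n := Nat.cast_pos.2 (dim_pos_of_Rrc_pos hR)
  have : 0 < log 2 := log_pos one_lt_two
  have hrate := Rrc_mul_log_two_le fun i => one_add_mul_pos (hlam i) hT.le
  rw [le_div_iff₀ (by positivity)] at hrate
  rw [inv_eq_one_div, div_le_div_iff₀ hT (by positivity)]
  linarith

end RandomCoding

theorem stmt_18_general (n : ℕ) (Rstar : ℝ) (hRstar : 0 < Rstar)
    (lam Wt : Fin n → ℝ) (hlam : ∀ j, 0 ≤ lam j)
    (T : ℝ) (hT : 0 < T) (hTR : Rrc lam T = Rstar) :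
    ∑ j, (4 * (Wt j) ^ 2 * (lam j) ^ 2 * (tauDef lam Wt T) ^ 2 / (1 + lam j * T) ^ 3
          + 2 * (lam j) ^ 2 * (tauDef lam Wt T) ^ 4 / (1 + lam j * T) ^ 2)
      ≤ (∑ j, lam j) ^ 2 / n * ‖Wt‖ ^ 4 *
          (1 / (2 * (Rstar * Real.log 2) ^ 2) + 1 / (Rstar * Real.log 2)) := by
  subst hTR
  have hn : (0 : ℝ) < n := Nat.cast_pos.2 (dim_pos_of_Rrc_pos hRstar)
  have hS : 0 ≤ ∑ j, lam j := Finset.sum_nonneg fun j _ => hlam j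
  have hTinv := inv_le_sum_div_Rrc_mul_log_two hlam hT hRstar
  have hvar := sum_variance_summand_le hlam hT (tauDef_sq_le_sq_norm Wt hlam hT.le)
  rw [Fintype.card_fin] at hvar
  set r := Rrc lam T * log 2
  have hr : 0 < r := mul_pos hRstar (log_pos one_lt_two)
  calc _ ≤ ‖Wt‖ ^ 4 * (2 * (∑ j, lam j) * T⁻¹ + 2 * n * T⁻¹ ^ 2) := hvar
    _ ≤ ‖Wt‖ ^ 4 * (2 * (∑ j, lam j) * ((∑ j, lam j) / (2 * n * r))
          + 2 * n * ((∑ j, lam j) / (2 * n * r)) ^ 2) := by gcongr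
    _ = (∑ j, lam j) ^ 2 / n * ‖Wt‖ ^ 4 * (1 / (2 * r ^ 2) + 1 / r) := by
        field_simp
        ring

/-- variance bound used in the single-codeword success analysis, with
`R_nat = R* ln 2` and `T = T_rc(λ, R*)` (the unique `T > 0` with `R_rc(λ, T) = R*`).
The sup norm `‖·‖` on `Fin n → ℝ` is `‖·‖∞`. -/
theorem stmt_18 (n : ℕ) (Rstar : ℝ) (hRstar : 0 < Rstar)
    (lam Wt : Fin n → ℝ) (hlam : ∀ j, 0 ≤ lam j) (hsum : ∑ j, lam j = (n : ℝ))
    (T : ℝ) (hT : 0 < T) (hTR : Rrc lam T = Rstar) :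
    ∑ j, (4 * (Wt j) ^ 2 * (lam j) ^ 2 * (tauDef lam Wt T) ^ 2 / (1 + lam j * T) ^ 3
          + 2 * (lam j) ^ 2 * (tauDef lam Wt T) ^ 4 / (1 + lam j * T) ^ 2)
      ≤ (n : ℝ) * ‖Wt‖ ^ 4 *
          (1 / (2 * (Rstar * Real.log 2) ^ 2) + 1 / (Rstar * Real.log 2)) := by
  simpa only [hsum, sq (n : ℝ), mul_self_div_self] using
    stmt_18_general n Rstar hRstar lam Wt hlam T hT hTR
end
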